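/- Let M be a properly infinite von Neumann algebra and let q, r be projections in M such that zq ≺ zr (strict subequivalence) for every nonzero central projection z. Then q⊥ = 1 − q is equivalent to 1. -/

import Mathlib

open ContinuousLinearMap Filter Topology

universe u

noncomputable section

variable {H : Type u} [NormedAddCommGroup H] [InnerProductSpace ℂ H] [CompleteSpace H]

/-- `p` is an (orthogonal) projection belonging to the von Neumann algebra `M`. -/
def IsProjIn (M : VonNeumannAlgebra H) (p : H →L[ℂ] H) : Prop :=
  p ∈ M ∧ IsSelfAdjoint p ∧ p * p = p

/-- Murray–von Neumann equivalence of `p` and `q` relative to `M`: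
there is a partial isometry `v ∈ M` with `v* v = p` and `v v* = q`. -/
def MvNEquiv (M : VonNeumannAlgebra H) (p q : H →L[ℂ] H) : Prop :=
  ∃ v ∈ M, adjoint v * v = p ∧ v * adjoint v = q

/-- The order on projections: `p ≤ q` iff `p q = p = q p`. -/
def ProjLE (p q : H →L[ℂ] H) : Prop := p * q = p ∧ q * p = p

/-- Murray–von Neumann subequivalence `p ≼ q`: `p` is equivalent to a subprojection of `q`. -/
def SubEquiv (M : VonNeumannAlgebra H) (p q : H →L[ℂ] H) : Prop :=
  ∃ r, IsProjIn M r ∧ MvNEquiv M p r ∧ ProjLE r q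

/-- `z` is a central projection of `M`. -/
def IsCentralProj (M : VonNeumannAlgebra H) (z : H →L[ℂ] H) : Prop :=
  IsProjIn M z ∧ ∀ x ∈ M, z * x = x * z

/-- A projection `p` is finite: `p ∼ q ≤ p` implies `q = p`. -/
def FiniteProj (M : VonNeumannAlgebra H) (p : H →L[ℂ] H) : Prop :=
  ∀ q, IsProjIn M q → ProjLE q p → MvNEquiv M p q → q = p

/-- A projection `p` is properly infinite: it is a countably infinite sum of pairwise
orthogonal projections, each equivalent to `p`. -/
def ProperlyInfiniteProj (M : VonNeumannAlgebra H) (p : H →L[ℂ] H) : Prop :=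
  p ≠ 0 ∧ ∃ e : ℕ → H →L[ℂ] H, (∀ n, IsProjIn M (e n)) ∧
    (Pairwise fun m n => e m * e n = 0) ∧ (∀ n, MvNEquiv M (e n) p) ∧
    ∀ ξ : H, HasSum (fun n => e n ξ) (p ξ)

/-- `z` is the central support of `h`: the smallest central projection with `z h = h`. -/
def IsCentralSupport (M : VonNeumannAlgebra H) (h z : H →L[ℂ] H) : Prop :=
  IsCentralProj M z ∧ z * h = h ∧ ∀ w, IsCentralProj M w → w * h = h → z * w = z

/-- The projection `e` is σ-finite relative to `M`: every family of pairwise orthogonal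
nonzero subprojections of `e` in `M` is countable. -/
def SigmaFiniteProj (M : VonNeumannAlgebra H) (e : H →L[ℂ] H) : Prop :=
  ∀ S : Set (H →L[ℂ] H), (∀ q ∈ S, IsProjIn M q ∧ q ≠ 0 ∧ ProjLE q e) →
    (S.Pairwise fun a b => a * b = 0) → S.Countable

/-- Kadison–Pedersen equivalence on the positive cone: `h ≈ k` iff there is a family
`{x_α} ⊆ M` with `h = Σ x_α* x_α` and `k = Σ x_α x_α*` (sums in the strong topology). -/
def KPEquiv (M : VonNeumannAlgebra H) (h k : H →L[ℂ] H) : Prop :=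
  ∃ (ι : Type u) (x : ι → H →L[ℂ] H), (∀ i, x i ∈ M) ∧
    (∀ ξ : H, HasSum (fun i => (adjoint (x i) * x i) ξ) (h ξ)) ∧
    (∀ ξ : H, HasSum (fun i => (x i * adjoint (x i)) ξ) (k ξ))

/-- Operator order: `a ≤ b` iff `b - a` is positive. -/
def OpLE (a b : H →L[ℂ] H) : Prop := (b - a).IsPositive

/-- `h ∈ M₊` is finite in the Kadison–Pedersen sense: `h ≈ k ≤ h` implies `k = h`. -/
def KPFinite (M : VonNeumannAlgebra H) (h : H →L[ℂ] H) : Prop :=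
  ∀ k, k ∈ M → k.IsPositive → OpLE k h → KPEquiv M h k → k = h

/-- `h ∈ M₊` is properly infinite: `z h` is finite and nonzero for no central projection `z`. -/
def KPProperlyInfinite (M : VonNeumannAlgebra H) (h : H →L[ℂ] H) : Prop :=
  h ≠ 0 ∧ ∀ z, IsCentralProj M z → KPFinite M (z * h) → z * h = 0

/-- The set of projections of `M`. -/
def ProjSet (M : VonNeumannAlgebra H) := {p : H →L[ℂ] H // IsProjIn M p}

/-- The strong operator topology on the projections of `M` (topology of pointwise convergence). -/
instance (M : VonNeumannAlgebra H) : TopologicalSpace (ProjSet M) :=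
  TopologicalSpace.induced (fun p : ProjSet M => (fun ξ => p.1 ξ : H → H)) inferInstance

/-- The quotient `P(M)/∼` of the projections of `M` by Murray–von Neumann equivalence,
carrying the quotient (strong operator) topology. -/
abbrev PQuot (M : VonNeumannAlgebra H) :=
  Quot (fun p q : ProjSet M => MvNEquiv M p.1 q.1)

/-- The quotient map `P(M) → P(M)/∼`. -/
def pquotMk (M : VonNeumannAlgebra H) : ProjSet M → PQuot M := Quot.mk _

/-- The strong operator topology on `B(H)`. -/
def SOT : TopologicalSpace (H →L[ℂ] H) :=
  TopologicalSpace.induced (fun a : H →L[ℂ] H => (fun ξ => a ξ : H → H)) inferInstance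

/-- The order induced on `P(M)/∼` by Murray–von Neumann subequivalence. -/
def QLE (M : VonNeumannAlgebra H) (a b : PQuot M) : Prop :=
  ∃ p q : ProjSet M, a = pquotMk M p ∧ b = pquotMk M q ∧ SubEquiv M p.1 q.1

/-!
Proper infiniteness provides a projection `p` with `1 ≼ p` and `1 ≼ 1 - p`. By the parallelogram
law `p - p ∧ q` is equivalent to a subprojection of `1 - q` orthogonal to `(1 - p) ∧ (1 - q)`, and
`(1 - p) - (1 - p) ∧ (1 - q)` to a subprojection of `q` orthogonal to `p ∧ q`. Comparing `p ∧ q`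
with `(1 - p) ∧ (1 - q)` therefore gives a central projection `z` with `z p ≼ z (1 - q)` and
`(1 - z) (1 - p) ≼ (1 - z) q`, whence `z (1 - q) ∼ z` and `(1 - z) q ∼ 1 - z` by
Schröder–Bernstein. The second equivalence is impossible unless `z = 1`, because
`(1 - z) q ≺ (1 - z) r ≼ 1 - z` whenever `1 - z ≠ 0`.
-/

/-- A partial isometry of a `*`-semigroup, encoded by the identity `u u* u = u`, which makes
`u* u` (the initial projection) and `u u*` (the final projection) projections. -/
def IsPartialIsometry {A : Type*} [Mul A] [Star A] (u : A) : Prop :=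
  u * star u * u = u

/-- Two elements are star-orthogonal when `u* w = 0` and `u w* = 0`. For partial isometries this
says that the initial projections are orthogonal and so are the final projections. -/
def IsStarOrthogonal {A : Type*} [Mul A] [Star A] [Zero A] (u w : A) : Prop :=
  star u * w = 0 ∧ u * star w = 0

section StarRing

variable {A : Type*}

theorem mul_eq_of_isSelfAdjoint_of_mul_eq [Mul A] [StarMul A] {p q : A}
    (hp : IsSelfAdjoint p) (hq : IsSelfAdjoint q) (h : p * q = q) : q * p = q := by
  simpa only [star_mul, hp.star_eq, hq.star_eq] using congrArg star h

theorem isStarProjection_conj [Semigroup A] [StarMul A] {v e : A} (he : IsStarProjection e)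
    (h : star v * v * e = e) : IsStarProjection (v * e * star v) := by
  refine ⟨?_, he.isSelfAdjoint.conjugate v⟩
  calc v * e * star v * (v * e * star v) = v * (e * (star v * v * e)) * star v := by
        simp only [mul_assoc]
    _ = v * e * star v := by rw [h, he.isIdempotentElem.eq]

theorem eq_of_isStarProjection_of_forall_mul_eq_zero_iff [Ring A] [StarRing A] {p q : A}
    (hp : IsStarProjection p) (hq : IsStarProjection q) (h : ∀ a, p * a = 0 ↔ q * a = 0) :
    p = q := by
  have hpq : p * q = p := by
    have := (h (1 - q)).2 hq.isIdempotentElem.mul_one_sub_self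
    rwa [mul_sub, mul_one, sub_eq_zero, eq_comm] at this
  have hqp : q * p = q := by
    have := (h (1 - p)).1 hp.isIdempotentElem.mul_one_sub_self
    rwa [mul_sub, mul_one, sub_eq_zero, eq_comm] at this
  rw [← hpq]
  simpa only [star_mul, hp.isSelfAdjoint.star_eq, hq.isSelfAdjoint.star_eq] using congrArg star hqp

theorem IsStarOrthogonal.symm [NonUnitalNonAssocSemiring A] [StarRing A] {u w : A}
    (h : IsStarOrthogonal u w) : IsStarOrthogonal w u :=
  ⟨by simpa using congrArg star h.1, by simpa using congrArg star h.2⟩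

namespace IsPartialIsometry

protected theorem star [Semigroup A] [StarMul A] {u : A} (hu : IsPartialIsometry u) :
    IsPartialIsometry (star u) := by
  simpa [IsPartialIsometry, mul_assoc] using congrArg star hu

theorem isStarProjection_star_mul_self [Semigroup A] [StarMul A] {u : A}
    (hu : IsPartialIsometry u) : IsStarProjection (star u * u) :=
  ⟨by rw [IsIdempotentElem, mul_assoc, ← mul_assoc u, hu], .star_mul_self u⟩

theorem isStarProjection_mul_star_self [Semigroup A] [StarMul A] {u : A}
    (hu : IsPartialIsometry u) : IsStarProjection (u * star u) := by
  simpa using hu.star.isStarProjection_star_mul_self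

theorem star_mul_self_mul_eq_zero_iff [SemigroupWithZero A] [StarMul A] {u a : A}
    (hu : IsPartialIsometry u) : star u * u * a = 0 ↔ u * a = 0 := by
  refine ⟨fun h => ?_, fun h => by rw [mul_assoc, h, mul_zero]⟩
  rw [← hu, mul_assoc u, mul_assoc u, h, mul_zero]

theorem sum [NonUnitalSemiring A] [StarRing A] {ι : Type*} {U : ι → A}
    (hU : ∀ i, IsPartialIsometry (U i)) (hUU : Pairwise fun i j => IsStarOrthogonal (U i) (U j))
    (F : Finset ι) : IsPartialIsometry (∑ i ∈ F, U i) := by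
  rw [IsPartialIsometry, Finset.mul_sum]
  refine Finset.sum_congr rfl fun i hi => ?_
  have hleft : star (∑ j ∈ F, U j) * U i = star (U i) * U i := by
    rw [star_sum, Finset.sum_mul]
    exact Finset.sum_eq_single_of_mem i hi fun j _ hj => (hUU hj).1
  have hright : (∑ j ∈ F, U j) * star (U i) = U i * star (U i) := by
    rw [Finset.sum_mul]
    exact Finset.sum_eq_single_of_mem i hi fun j _ hj => (hUU hj).2
  rw [mul_assoc, hleft, ← mul_assoc, hright, hU i]

end IsPartialIsometry

end StarRing

section CStarRing

variable {A : Type*} [NonUnitalNormedRing A] [StarRing A] [CStarRing A]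

theorem mul_eq_zero_iff_of_star_mul_self_eq {x s : A} (h : star x * x = star s * s) (a : A) :
    x * a = 0 ↔ s * a = 0 := by
  have conj (t : A) : star (t * a) * (t * a) = star a * (star t * t) * a := by
    simp only [star_mul, mul_assoc]
  rw [← CStarRing.star_mul_self_eq_zero_iff, conj, h, ← conj, CStarRing.star_mul_self_eq_zero_iff]

theorem isPartialIsometry_of_isStarProjection_star_mul_self {u : A}
    (h : IsStarProjection (star u * u)) : IsPartialIsometry u := by
  have hp := h.isIdempotentElem.eq
  have : star (u * star u * u - u) * (u * star u * u - u) = 0 := by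
    calc star (u * star u * u - u) * (u * star u * u - u)
        = star u * u * (star u * u) * (star u * u) - star u * u * (star u * u)
          - (star u * u * (star u * u) - star u * u) := by
          simp only [star_sub, star_mul, star_star, sub_mul, mul_sub, mul_assoc]
      _ = 0 := by simp only [hp, sub_self]
  exact sub_eq_zero.1 ((CStarRing.star_mul_self_eq_zero_iff _).1 this)

theorem IsPartialIsometry.norm_le_one {u : A} (hu : IsPartialIsometry u) : ‖u‖ ≤ 1 := by
  rw [← abs_of_nonneg (norm_nonneg u), ← sq_le_one_iff_abs_le_one, sq,
    ← CStarRing.norm_star_mul_self]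
  exact hu.isStarProjection_star_mul_self.norm_le

end CStarRing

theorem mem_iff_forall_mem_commutant {M : VonNeumannAlgebra H} {x : H →L[ℂ] H} :
    x ∈ M ↔ ∀ y ∈ M.commutant, y * x = x * y := by
  rw [← VonNeumannAlgebra.mem_commutant_iff, M.commutant_commutant]

section StrongSum

variable {𝕜 E ι : Type*} [NontriviallyNormedField 𝕜] [NormedAddCommGroup E] [NormedSpace 𝕜 E]

/-- `T` is the sum of the family `U` in the strong operator topology. -/
def HasStrongSum (U : ι → E →L[𝕜] E) (T : E →L[𝕜] E) : Prop :=
  ∀ ξ, HasSum (fun i => U i ξ) (T ξ)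

namespace HasStrongSum

variable {U : ι → E →L[𝕜] E} {S T : E →L[𝕜] E}

theorem unique (hS : HasStrongSum U S) (hT : HasStrongSum U T) : S = T :=
  ContinuousLinearMap.ext fun ξ => (hS ξ).unique (hT ξ)

theorem mul_left (hT : HasStrongSum U T) (a : E →L[𝕜] E) :
    HasStrongSum (fun i => a * U i) (a * T) :=
  fun ξ => a.hasSum (hT ξ)

theorem mul_right (hT : HasStrongSum U T) (a : E →L[𝕜] E) :
    HasStrongSum (fun i => U i * a) (T * a) :=
  fun ξ => hT (a ξ)

theorem eq_of_forall_ne (hT : HasStrongSum U T) {i : ι} (h : ∀ j ≠ i, U j = 0) : T = U i :=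
  ContinuousLinearMap.ext fun ξ => (hT ξ).unique <| hasSum_single i fun j hj => by simp [h j hj]

theorem mem {M : VonNeumannAlgebra H} {U : ι → H →L[ℂ] H} {T : H →L[ℂ] H}
    (hT : HasStrongSum U T) (hU : ∀ i, U i ∈ M) : T ∈ M := by
  refine mem_iff_forall_mem_commutant.2 fun y hy => ?_
  have hyU : (fun i => y * U i) = fun i => U i * y :=
    funext fun i => mem_iff_forall_mem_commutant.1 (hU i) y hy
  exact (hyU ▸ hT.mul_left y).unique (hT.mul_right y)

end HasStrongSum

theorem IsStarOrthogonal.inner_eq_zero {u w : H →L[ℂ] H} (h : IsStarOrthogonal u w) (ξ η : H) :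
    inner ℂ (u ξ) (w η) = 0 := by
  rw [← adjoint_inner_right]
  change inner ℂ ξ ((star u * w) η) = 0
  rw [h.1, zero_apply, inner_zero_right]

theorem exists_hasStrongSum {U : ι → H →L[ℂ] H} (hU : ∀ i, IsPartialIsometry (U i))
    (hUU : Pairwise fun i j => IsStarOrthogonal (U i) (U j)) : ∃ T, HasStrongSum U T := by
  have norm_sum_le (F : Finset ι) (ξ : H) : ‖∑ i ∈ F, U i ξ‖ ≤ ‖ξ‖ := by
    simpa [sum_apply] using le_of_opNorm_le _ (IsPartialIsometry.sum hU hUU F).norm_le_one ξ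
  have hortho : OrthogonalFamily ℂ (fun i => (U i).range) fun i => (U i).range.subtypeₗᵢ := by
    rintro i j hij ⟨_, ξ, rfl⟩ ⟨_, η, rfl⟩
    exact (hUU hij).inner_eq_zero ξ η
  have summable (ξ : H) : Summable fun i => U i ξ := by
    let f (i : ι) : (U i).range := ⟨U i ξ, ξ, rfl⟩
    refine (hortho.summable_iff_norm_sq_summable f).2 <|
      summable_of_sum_le (c := ‖ξ‖ ^ 2) (fun i => by positivity) fun F => ?_
    rw [← hortho.norm_sum f F]
    exact pow_le_pow_left₀ (norm_nonneg _) (norm_sum_le F ξ) 2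
  let L : H →ₗ[ℂ] H :=
    { toFun := fun ξ => ∑' i, U i ξ
      map_add' := fun ξ η => by simp only [map_add, (summable ξ).tsum_add (summable η)]
      map_smul' := fun c ξ => by
        simp only [map_smul, (summable ξ).tsum_const_smul c, RingHom.id_apply] }
  have norm_L_le (ξ : H) : ‖L ξ‖ ≤ 1 * ‖ξ‖ := by
    rw [one_mul]
    exact le_of_tendsto (summable ξ).hasSum.norm (.of_forall fun F => norm_sum_le F ξ)
  exact ⟨L.mkContinuous 1 norm_L_le, fun ξ => (summable ξ).hasSum⟩

theorem exists_isPartialIsometry_hasStrongSum {U : ι → H →L[ℂ] H}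
    (hU : ∀ i, IsPartialIsometry (U i))
    (hUU : Pairwise fun i j => IsStarOrthogonal (U i) (U j)) :
    ∃ T, HasStrongSum U T ∧ IsPartialIsometry T ∧
      (∀ i, T * star T * U i = U i) ∧ ∀ i, U i * (star T * T) = U i := by
  obtain ⟨T, hT⟩ := exists_hasStrongSum hU hUU
  have hTU (i : ι) : T * star (U i) = U i * star (U i) :=
    (hT.mul_right _).eq_of_forall_ne fun j hj => (hUU hj).2
  have hUT (i : ι) : star (U i) * T = star (U i) * U i :=
    (hT.mul_left _).eq_of_forall_ne fun j hj => (hUU hj.symm).1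
  have hTU' (i : ι) : U i * star T = U i * star (U i) := by simpa using congrArg star (hTU i)
  have hUT' (i : ι) : star T * U i = star (U i) * U i := by simpa using congrArg star (hUT i)
  have hfinal (i : ι) : T * star T * U i = U i := by
    rw [mul_assoc, hUT', ← mul_assoc, hTU, hU i]
  refine ⟨T, hT, ?_, hfinal, fun i => ?_⟩
  · have h := hT.mul_left (T * star T)
    simp only [hfinal] at h
    exact h.unique hT
  · rw [← mul_assoc, hTU', mul_assoc, hUT, ← mul_assoc, hU i]

end StrongSum

section AnnihilatorProj

section CommonKer

variable {𝕜 E : Type*} [NontriviallyNormedField 𝕜] [NormedAddCommGroup E] [NormedSpace 𝕜 E]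

/-- The closed subspace of the vectors killed by every operator in `S`. -/
def commonKer (S : Set (E →L[𝕜] E)) : ClosedSubmodule 𝕜 E :=
  ⨅ x ∈ S, (⊥ : ClosedSubmodule 𝕜 E).comap x

theorem mem_commonKer {S : Set (E →L[𝕜] E)} {ξ : E} : ξ ∈ commonKer S ↔ ∀ x ∈ S, x ξ = 0 := by
  simp only [commonKer, ClosedSubmodule.mem_iInf, ClosedSubmodule.mem_comap,
    ClosedSubmodule.mem_bot]

end CommonKer

/-- The projection `e` that generates the right annihilator of `S`: `x a = 0` for all `x ∈ S` if
and only if `e a = a`. That it lies in `M` whenever `S ⊆ M` makes `M` a Baer `*`-ring. The support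
projections of `x` are `1 - annihilatorProj {x}` and `1 - annihilatorProj {star x}`. -/
def annihilatorProj (S : Set (H →L[ℂ] H)) : H →L[ℂ] H :=
  (commonKer S).toSubmodule.starProjection

variable {S : Set (H →L[ℂ] H)} {a : H →L[ℂ] H}

theorem isStarProjection_annihilatorProj : IsStarProjection (annihilatorProj S) :=
  isStarProjection_starProjection

theorem annihilatorProj_mul_eq_self_iff :
    annihilatorProj S * a = a ↔ ∀ x ∈ S, x * a = 0 := by
  simp only [ContinuousLinearMap.ext_iff, mul_apply_eq_comp, zero_apply, annihilatorProj,
    Submodule.starProjection_eq_self_iff, ClosedSubmodule.mem_toSubmodule_iff, mem_commonKer]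
  exact ⟨fun h x hx ξ => h ξ x hx, fun h ξ x hx => h x hx ξ⟩

theorem mul_annihilatorProj {x : H →L[ℂ] H} (hx : x ∈ S) : x * annihilatorProj S = 0 :=
  annihilatorProj_mul_eq_self_iff.1 isStarProjection_annihilatorProj.isIdempotentElem x hx

theorem one_sub_annihilatorProj_mul_eq_zero_iff :
    (1 - annihilatorProj S) * a = 0 ↔ ∀ x ∈ S, x * a = 0 := by
  rw [sub_mul, one_mul, sub_eq_zero, eq_comm, annihilatorProj_mul_eq_self_iff]

theorem mul_one_sub_annihilatorProj_eq_zero_iff :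
    a * (1 - annihilatorProj S) = 0 ↔ ∀ x ∈ S, a * star x = 0 := by
  rw [← star_eq_zero, star_mul, isStarProjection_annihilatorProj.one_sub.isSelfAdjoint.star_eq,
    one_sub_annihilatorProj_mul_eq_zero_iff]
  refine forall₂_congr fun x _ => ?_
  rw [← star_eq_zero, star_mul, star_star]

theorem annihilatorProj_eq {e : H →L[ℂ] H} (he : IsStarProjection e)
    (h : ∀ a, e * a = a ↔ ∀ x ∈ S, x * a = 0) : annihilatorProj S = e := by
  have hSe : annihilatorProj S * e = e :=
    annihilatorProj_mul_eq_self_iff.2 ((h e).1 he.isIdempotentElem)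
  have heS : e * annihilatorProj S = annihilatorProj S := (h _).2 fun _ => mul_annihilatorProj
  rw [← heS]
  exact mul_eq_of_isSelfAdjoint_of_mul_eq
    isStarProjection_annihilatorProj.isSelfAdjoint he.isSelfAdjoint hSe

theorem isProjIn_iff {M : VonNeumannAlgebra H} {p : H →L[ℂ] H} :
    IsProjIn M p ↔ p ∈ M ∧ IsStarProjection p :=
  and_congr_right' ⟨fun h => ⟨h.2, h.1⟩, fun h => ⟨h.2, h.1⟩⟩

theorem isProjIn_annihilatorProj {M : VonNeumannAlgebra H} (hS : S ⊆ M) :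
    IsProjIn M (annihilatorProj S) := by
  refine isProjIn_iff.2 ⟨?_, isStarProjection_annihilatorProj⟩
  rw [VonNeumannAlgebra.IsStarProjection.mem_iff isStarProjection_annihilatorProj]
  intro y hy
  rw [annihilatorProj, Submodule.range_starProjection, Module.End.mem_invtSubmodule]
  intro ξ hξ
  change y ξ ∈ commonKer S
  refine mem_commonKer.2 fun x hx => ?_
  calc x (y ξ) = y (x ξ) := congr($(VonNeumannAlgebra.mem_commutant_iff.1 hy x (hS hx)) ξ)
    _ = 0 := by rw [mem_commonKer.1 hξ x hx, map_zero]

end AnnihilatorProj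

section Polar

theorem exists_comp_eq_of_norm_le {𝕜 E F G : Type*} [RCLike 𝕜]
    [NormedAddCommGroup E] [NormedSpace 𝕜 E] [NormedAddCommGroup F] [NormedSpace 𝕜 F]
    [CompleteSpace F] [NormedAddCommGroup G] [InnerProductSpace 𝕜 G] [CompleteSpace G]
    {x : E →L[𝕜] F} {s : E →L[𝕜] G} {C : ℝ} (h : ∀ ξ, ‖x ξ‖ ≤ C * ‖s ξ‖) :
    ∃ u : G →L[𝕜] F, u ∘L s = x ∧ ∀ η ∈ s.rangeᗮ, u η = 0 := by
  let K := s.range.topologicalClosure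
  have : CompleteSpace K := s.range.isClosed_topologicalClosure.completeSpace_coe
  let e : E →ₗ[𝕜] K :=
    s.toLinearMap.codRestrict K fun ξ => s.range.le_topologicalClosure ⟨ξ, rfl⟩
  have he : DenseRange e := by
    have : e = Set.inclusion s.range.le_topologicalClosure ∘ s.rangeRestrict := rfl
    rw [this]
    exact ((denseRange_inclusion_iff _).2 subset_rfl).comp
      s.toLinearMap.surjective_rangeRestrict.denseRange (continuous_inclusion _)
  let w : K →L[𝕜] F := x.toLinearMap.extendOfNorm e
  refine ⟨w ∘L K.orthogonalProjectionOnto, ?_, fun η hη => ?_⟩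
  · ext ξ
    have hs : K.orthogonalProjectionOnto (s ξ) = e ξ :=
      K.orthogonalProjectionOnto_mem_subspace_eq_self (e ξ)
    simp only [ContinuousLinearMap.comp_apply, hs]
    exact x.toLinearMap.extendOfNorm_eq he ⟨C, h⟩ ξ
  · rw [← Submodule.orthogonal_closure] at hη
    rw [ContinuousLinearMap.comp_apply, Submodule.orthogonalProjectionOnto_eq_zero_iff.2 hη,
      map_zero]

theorem annihilatorProj_singleton_congr {x s : H →L[ℂ] H} (h : star x * x = star s * s) :
    annihilatorProj {x} = annihilatorProj {s} :=
  annihilatorProj_eq isStarProjection_annihilatorProj fun a => by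
    simp only [annihilatorProj_mul_eq_self_iff, Set.mem_singleton_iff, forall_eq,
      mul_eq_zero_iff_of_star_mul_self_eq h]

theorem norm_apply_eq_of_star_mul_self_eq {x s : H →L[ℂ] H} (h : star x * x = star s * s) (ξ : H) :
    ‖x ξ‖ = ‖s ξ‖ := by
  refine (sq_eq_sq₀ (norm_nonneg _) (norm_nonneg _)).1 ?_
  have h' : adjoint x ∘L x = adjoint s ∘L s := h
  rw [apply_norm_sq_eq_inner_adjoint_left, h', ← apply_norm_sq_eq_inner_adjoint_left]

theorem star_mul_self_eq_star_cfcAbs_mul_cfcAbs (x : H →L[ℂ] H) :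
    star x * x = star (CFC.abs x) * CFC.abs x := by
  rw [(CFC.abs_nonneg x).isSelfAdjoint.star_eq, CFC.abs_mul_abs]

theorem annihilatorProj_cfcAbs (x : H →L[ℂ] H) :
    annihilatorProj {CFC.abs x} = annihilatorProj {x} :=
  (annihilatorProj_singleton_congr (star_mul_self_eq_star_cfcAbs_mul_cfcAbs x)).symm

theorem one_sub_annihilatorProj_mul_eq_zero_of_cfcAbs_mul {x a : H →L[ℂ] H}
    (h : CFC.abs x * a = 0) : (1 - annihilatorProj {x}) * a = 0 := by
  rw [← annihilatorProj_cfcAbs]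
  exact one_sub_annihilatorProj_mul_eq_zero_iff.2 (by simpa using h)

theorem mul_one_sub_annihilatorProj_eq_zero_of_mul_cfcAbs {x a : H →L[ℂ] H}
    (h : a * CFC.abs x = 0) : a * (1 - annihilatorProj {x}) = 0 := by
  rw [← annihilatorProj_cfcAbs, mul_one_sub_annihilatorProj_eq_zero_iff]
  simpa [(CFC.abs_nonneg x).isSelfAdjoint.star_eq] using h

theorem exists_mul_cfcAbs_eq (x : H →L[ℂ] H) :
    ∃ u, u * CFC.abs x = x ∧ u * annihilatorProj {x} = 0 := by
  have hs := (CFC.abs_nonneg x).isSelfAdjoint.star_eq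
  obtain ⟨u, hu, hu0⟩ := exists_comp_eq_of_norm_le (x := x) (s := CFC.abs x) (C := 1) fun ξ => by
    rw [one_mul, norm_apply_eq_of_star_mul_self_eq (star_mul_self_eq_star_cfcAbs_mul_cfcAbs x)]
  refine ⟨u, hu, ContinuousLinearMap.ext fun ξ => hu0 _ ?_⟩
  have hsN : CFC.abs x * annihilatorProj {x} = 0 := by
    rw [← annihilatorProj_cfcAbs]
    exact mul_annihilatorProj rfl
  rw [ContinuousLinearMap.orthogonal_range, ← star_eq_adjoint, hs]
  exact congr($hsN ξ)

theorem star_mul_self_eq_of_mul_cfcAbs_eq {x u : H →L[ℂ] H} (hu : u * CFC.abs x = x)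
    (hu0 : u * annihilatorProj {x} = 0) : star u * u = 1 - annihilatorProj {x} := by
  set P := 1 - annihilatorProj {x} with hPdef
  have hs : star (CFC.abs x) = CFC.abs x := (CFC.abs_nonneg x).isSelfAdjoint.star_eq
  have hP : IsStarProjection P := isStarProjection_annihilatorProj.one_sub
  have huP : u * P = u := by rw [hPdef, mul_sub, mul_one, hu0, sub_zero]
  have hPu : P * star u = star u := by
    simpa only [star_mul, hP.isSelfAdjoint.star_eq] using congrArg star huP
  have hsus : CFC.abs x * (star u * u - 1) * CFC.abs x = 0 := by
    have : CFC.abs x * star u = star x := by simpa only [star_mul, hs] using congrArg star hu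
    rw [mul_sub, mul_one, sub_mul, ← mul_assoc, this, mul_assoc, hu, CFC.abs_mul_abs, sub_self]
  have hPuP : P * ((star u * u - 1) * P) = 0 := by
    refine one_sub_annihilatorProj_mul_eq_zero_of_cfcAbs_mul ?_
    rw [← mul_assoc]
    exact mul_one_sub_annihilatorProj_eq_zero_of_mul_cfcAbs hsus
  calc star u * u = P * (star u * u) * P := by
        rw [mul_assoc, mul_assoc, huP, ← mul_assoc, hPu]
    _ = P * ((star u * u - 1) * P) + P * P := by noncomm_ring
    _ = P := by rw [hPuP, zero_add, hP.isIdempotentElem.eq]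

theorem cfcAbs_mem {M : VonNeumannAlgebra H} {x : H →L[ℂ] H} (hx : x ∈ M) : CFC.abs x ∈ M := by
  refine mem_iff_forall_mem_commutant.2 fun y hy => ?_
  have commute {y : H →L[ℂ] H} (hy : y ∈ M.commutant) : Commute x y :=
    VonNeumannAlgebra.mem_commutant_iff.1 hy x hx
  exact ((commute hy).cfcAbs_left (commute (star_mem hy))).symm

theorem mem_of_mul_cfcAbs_eq {M : VonNeumannAlgebra H} {x u : H →L[ℂ] H} (hx : x ∈ M)
    (hu : u * CFC.abs x = x) (hu0 : u * annihilatorProj {x} = 0) : u ∈ M := by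
  refine mem_iff_forall_mem_commutant.2 fun y hy => ?_
  set P := 1 - annihilatorProj {x} with hPdef
  have huP : u * P = u := by rw [hPdef, mul_sub, mul_one, hu0, sub_zero]
  have hPM : P ∈ M :=
    sub_mem (one_mem M) (isProjIn_annihilatorProj (Set.singleton_subset_iff.2 hx)).1
  have hs : (y * u - u * y) * CFC.abs x = 0 := by
    rw [sub_mul, mul_assoc, hu, mul_assoc, mem_iff_forall_mem_commutant.1 (cfcAbs_mem hx) y hy,
      ← mul_assoc, hu, mem_iff_forall_mem_commutant.1 hx y hy, sub_self]
  have hP := mul_one_sub_annihilatorProj_eq_zero_of_mul_cfcAbs hs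
  rw [← hPdef, sub_mul, mul_assoc, huP, mul_assoc, mem_iff_forall_mem_commutant.1 hPM y hy,
    ← mul_assoc, huP] at hP
  exact sub_eq_zero.1 hP

theorem mvNEquiv_one_sub_annihilatorProj {M : VonNeumannAlgebra H} {x : H →L[ℂ] H} (hx : x ∈ M) :
    MvNEquiv M (1 - annihilatorProj {x}) (1 - annihilatorProj {star x}) := by
  obtain ⟨u, hu, hu0⟩ := exists_mul_cfcAbs_eq x
  have huu := star_mul_self_eq_of_mul_cfcAbs_eq hu hu0
  have hpi : IsPartialIsometry u :=
    isPartialIsometry_of_isStarProjection_star_mul_self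
      (huu ▸ isStarProjection_annihilatorProj.one_sub)
  have hfinal : annihilatorProj {star x} = 1 - u * star u := by
    refine annihilatorProj_eq hpi.isStarProjection_mul_star_self.one_sub fun a => ?_
    have : star x * a = 0 ↔ star u * a = 0 := by
      refine ⟨fun h => ?_, fun h => by rw [← hu, star_mul, mul_assoc, h, mul_zero]⟩
      have h' : star a * u * CFC.abs x = 0 := by
        rw [mul_assoc, hu]
        simpa using congrArg star h
      have h'' := mul_one_sub_annihilatorProj_eq_zero_of_mul_cfcAbs h'
      rw [← huu, mul_assoc, ← mul_assoc u, hpi] at h''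
      simpa using congrArg star h''
    have hu' := hpi.star.star_mul_self_mul_eq_zero_iff (a := a)
    rw [star_star] at hu'
    simp only [Set.mem_singleton_iff, forall_eq, this, sub_mul, one_mul, sub_eq_self, hu']
  exact ⟨u, mem_of_mul_cfcAbs_eq hx hu hu0, huu, by rw [hfinal, sub_sub_cancel]; rfl⟩

end Polar

section Comparison

variable {M : VonNeumannAlgebra H} {p q r z a b : H →L[ℂ] H}

theorem IsProjIn.isStarProjection (hp : IsProjIn M p) : IsStarProjection p :=
  (isProjIn_iff.1 hp).2

theorem IsProjIn.star_eq (hp : IsProjIn M p) : star p = p :=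
  hp.2.1.star_eq

theorem isProjIn_one : IsProjIn M 1 :=
  isProjIn_iff.2 ⟨one_mem M, .one _⟩

theorem IsProjIn.one_sub (hp : IsProjIn M p) : IsProjIn M (1 - p) :=
  isProjIn_iff.2 ⟨sub_mem (one_mem M) hp.1, hp.isStarProjection.one_sub⟩

theorem IsProjIn.sub (hp : IsProjIn M p) (hq : IsProjIn M q) (h : p * q = q) :
    IsProjIn M (p - q) :=
  isProjIn_iff.2 ⟨sub_mem hp.1 hq.1, hq.isStarProjection.sub_of_mul_eq_right hp.isStarProjection h⟩

theorem IsProjIn.add (hp : IsProjIn M p) (hq : IsProjIn M q) (h : p * q = 0) :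
    IsProjIn M (p + q) :=
  isProjIn_iff.2 ⟨add_mem hp.1 hq.1, hp.isStarProjection.add hq.isStarProjection h⟩

theorem IsPartialIsometry.isProjIn_star_mul_self {u : H →L[ℂ] H} (hu : IsPartialIsometry u)
    (huM : u ∈ M) : IsProjIn M (star u * u) :=
  isProjIn_iff.2 ⟨mul_mem (star_mem huM) huM, hu.isStarProjection_star_mul_self⟩

theorem IsPartialIsometry.isProjIn_mul_star_self {u : H →L[ℂ] H} (hu : IsPartialIsometry u)
    (huM : u ∈ M) : IsProjIn M (u * star u) :=
  isProjIn_iff.2 ⟨mul_mem huM (star_mem huM), hu.isStarProjection_mul_star_self⟩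

namespace IsCentralProj

theorem one_sub (hz : IsCentralProj M z) : IsCentralProj M (1 - z) :=
  ⟨hz.1.one_sub, fun x hx => by rw [sub_mul, mul_sub, one_mul, mul_one, hz.2 x hx]⟩

theorem mul_mul_mul (hz : IsCentralProj M z) (ha : a ∈ M) : z * a * (z * b) = z * (a * b) := by
  rw [hz.2 a ha, mul_assoc, ← mul_assoc z, hz.1.2.2, ← mul_assoc, ← hz.2 a ha, mul_assoc]

theorem star_mul (hz : IsCentralProj M z) (ha : a ∈ M) : star (z * a) = z * star a := by
  rw [StarMul.star_mul, hz.1.star_eq, hz.2 _ (star_mem ha)]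

theorem isProjIn_mul (hz : IsCentralProj M z) (hp : IsProjIn M p) : IsProjIn M (z * p) := by
  refine ⟨mul_mem hz.1.1 hp.1, ?_, by rw [hz.mul_mul_mul hp.1, hp.2.2]⟩
  rw [IsSelfAdjoint, hz.star_mul hp.1, hp.star_eq]

end IsCentralProj

namespace MvNEquiv

protected theorem symm (h : MvNEquiv M p q) : MvNEquiv M q p := by
  obtain ⟨v, hv, hvp, hvq⟩ := h
  exact ⟨star v, star_mem hv, by rwa [← star_eq_adjoint, star_star],
    by rwa [← star_eq_adjoint, star_star]⟩

protected theorem trans (hpq : MvNEquiv M p q) (hqr : MvNEquiv M q r) (hp : IsProjIn M p)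
    (hr : IsProjIn M r) : MvNEquiv M p r := by
  obtain ⟨v, hv, rfl, rfl⟩ := hpq
  obtain ⟨w, hw, hwq, rfl⟩ := hqr
  simp only [← star_eq_adjoint] at hwq hp hr ⊢
  refine ⟨w * v, mul_mem hw hv, ?_, ?_⟩
  · calc star (w * v) * (w * v) = star v * (star w * w) * v := by simp only [star_mul, mul_assoc]
      _ = star v * v * (star v * v) := by rw [hwq]; simp only [mul_assoc]
      _ = star v * v := hp.2.2
  · calc w * v * star (w * v) = w * (v * star v) * star w := by simp only [star_mul, mul_assoc]
      _ = w * star w * (w * star w) := by rw [← hwq]; simp only [mul_assoc]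
      _ = w * star w := hr.2.2

theorem subEquiv (h : MvNEquiv M p q) (hq : IsProjIn M q) : SubEquiv M p q :=
  ⟨q, hq, h, hq.2.2, hq.2.2⟩

theorem central_mul (h : MvNEquiv M p q) (hz : IsCentralProj M z) :
    MvNEquiv M (z * p) (z * q) := by
  obtain ⟨v, hv, rfl, rfl⟩ := h
  refine ⟨z * v, mul_mem hz.1.1 hv, ?_, ?_⟩
  all_goals simp only [← star_eq_adjoint, hz.star_mul hv, hz.mul_mul_mul, hv, star_mem hv]

end MvNEquiv

theorem subEquiv_iff (hp : IsProjIn M p) (hq : IsProjIn M q) :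
    SubEquiv M p q ↔ ∃ v ∈ M, star v * v = p ∧ q * v = v := by
  constructor
  · rintro ⟨_, hr, ⟨v, hv, hvp, rfl⟩, -, hqr⟩
    have hpi : IsPartialIsometry v :=
      isPartialIsometry_of_isStarProjection_star_mul_self (hvp ▸ hp.isStarProjection)
    refine ⟨v, hv, hvp, ?_⟩
    calc q * v = q * (v * star v) * v := by rw [mul_assoc, hpi]
      _ = v := by rw [star_eq_adjoint, hqr, ← star_eq_adjoint, hpi]
  · rintro ⟨v, hv, rfl, hqv⟩
    have hpi : IsPartialIsometry v :=
      isPartialIsometry_of_isStarProjection_star_mul_self hp.isStarProjection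
    have hr := hpi.isProjIn_mul_star_self hv
    have hqr : q * (v * star v) = v * star v := by rw [← mul_assoc, hqv]
    exact ⟨_, hr, ⟨v, hv, rfl, rfl⟩, mul_eq_of_isSelfAdjoint_of_mul_eq hq.2.1 hr.2.1 hqr, hqr⟩

namespace SubEquiv

theorem of_mul_eq (hp : IsProjIn M p) (hq : IsProjIn M q) (h : q * p = p) : SubEquiv M p q :=
  (subEquiv_iff hp hq).2 ⟨p, hp.1, by rw [hp.star_eq, hp.2.2], h⟩

protected theorem trans (hpq : SubEquiv M p q) (hqr : SubEquiv M q r) (hp : IsProjIn M p)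
    (hq : IsProjIn M q) (hr : IsProjIn M r) : SubEquiv M p r := by
  obtain ⟨v, hv, hvp, hqv⟩ := (subEquiv_iff hp hq).1 hpq
  obtain ⟨w, hw, hwq, hrw⟩ := (subEquiv_iff hq hr).1 hqr
  refine (subEquiv_iff hp hr).2 ⟨w * v, mul_mem hw hv, ?_, by rw [← mul_assoc, hrw]⟩
  rw [star_mul, mul_assoc, ← mul_assoc (star w), hwq, hqv, hvp]

theorem central_mul (h : SubEquiv M p q) (hp : IsProjIn M p) (hq : IsProjIn M q)
    (hz : IsCentralProj M z) : SubEquiv M (z * p) (z * q) := by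
  obtain ⟨v, hv, hvp, hqv⟩ := (subEquiv_iff hp hq).1 h
  refine (subEquiv_iff (hz.isProjIn_mul hp) (hz.isProjIn_mul hq)).2
    ⟨z * v, mul_mem hz.1.1 hv, ?_, by rw [hz.mul_mul_mul hq.1, hqv]⟩
  rw [hz.star_mul hv, hz.mul_mul_mul (star_mem hv), hvp]

theorem add {p₁ p₂ q₁ q₂ : H →L[ℂ] H} (h₁ : SubEquiv M p₁ q₁) (h₂ : SubEquiv M p₂ q₂)
    (hp₁ : IsProjIn M p₁) (hp₂ : IsProjIn M p₂) (hq₁ : IsProjIn M q₁) (hq₂ : IsProjIn M q₂)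
    (hp : p₁ * p₂ = 0) (hq : q₁ * q₂ = 0) : SubEquiv M (p₁ + p₂) (q₁ + q₂) := by
  obtain ⟨v, hv, hvp, hqv⟩ := (subEquiv_iff hp₁ hq₁).1 h₁
  obtain ⟨w, hw, hwp, hqw⟩ := (subEquiv_iff hp₂ hq₂).1 h₂
  have hq' : q₂ * q₁ = 0 := by
    simpa only [star_mul, hq₁.star_eq, hq₂.star_eq, star_zero] using congrArg star hq
  have hqw' : q₁ * w = 0 := by rw [← hqw, ← mul_assoc, hq, zero_mul]
  have hqv' : q₂ * v = 0 := by rw [← hqv, ← mul_assoc, hq', zero_mul]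
  have hvw : star v * w = 0 := by
    rw [← hqv, star_mul, hq₁.star_eq, mul_assoc, hqw', mul_zero]
  have hwv : star w * v = 0 := by simpa using congrArg star hvw
  refine (subEquiv_iff (hp₁.add hp₂ hp) (hq₁.add hq₂ hq)).2 ⟨v + w, add_mem hv hw, ?_, ?_⟩
  · rw [star_add, add_mul, mul_add, mul_add, hvp, hvw, hwv, hwp, add_zero, zero_add]
  · rw [add_mul, mul_add, mul_add, hqv, hqw, hqv', hqw', add_zero, zero_add]

end SubEquiv

section SchroederBernstein

/- `e` is the projection onto the closed span of the ranges of the `v ^ n * d`, which `v` shifts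
to the next one. -/
theorem exists_isProjIn_forall_mul_eq_zero_iff {d v : H →L[ℂ] H} (hp : IsProjIn M p)
    (hd : IsProjIn M d) (hv : v ∈ M) (hpv : p * v = v) (hpd : p * d = d) :
    ∃ e, IsProjIn M e ∧ p * e = e ∧ ∀ a, e * a = 0 ↔ d * a = 0 ∧ e * (star v * a) = 0 := by
  let S : Set (H →L[ℂ] H) := Set.range fun n : ℕ => d * star v ^ n
  have hS : S ⊆ M := by
    rintro _ ⟨n, rfl⟩
    exact mul_mem hd.1 (pow_mem (star_mem hv) n)
  let e := 1 - annihilatorProj S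
  have he : IsProjIn M e := (isProjIn_annihilatorProj hS).one_sub
  have he0 (a : H →L[ℂ] H) : e * a = 0 ↔ ∀ n, d * star v ^ n * a = 0 := by
    rw [one_sub_annihilatorProj_mul_eq_zero_iff, Set.forall_mem_range]
  have he0_succ (a : H →L[ℂ] H) : e * a = 0 ↔ d * a = 0 ∧ e * (star v * a) = 0 := by
    rw [he0, he0, ← Nat.and_forall_add_one]
    simp only [pow_zero, mul_one, pow_succ, mul_assoc]
  have hvp' : star v * p = star v := by
    simpa only [star_mul, hp.star_eq] using congrArg star hpv
  have hdp : d * p = d := by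
    simpa only [star_mul, hp.star_eq, hd.star_eq] using congrArg star hpd
  have hep : e * p = e := by
    have : e * (1 - p) = 0 := by
      rw [he0_succ, mul_sub, mul_sub, mul_one, mul_one, hdp, hvp', sub_self, sub_self, mul_zero]
      exact ⟨rfl, rfl⟩
    rw [mul_sub, mul_one, sub_eq_zero] at this
    exact this.symm
  have hpe : p * e = e := by
    simpa only [star_mul, hp.star_eq, he.star_eq] using congrArg star hep
  exact ⟨e, he, hpe, he0_succ⟩

theorem exists_isProjIn_eq_add_conj {d v : H →L[ℂ] H} (hp : IsProjIn M p) (hd : IsProjIn M d)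
    (hv : v ∈ M) (hvp : star v * v = p) (hpv : p * v = v) (hpd : p * d = d) (hdv : d * v = 0) :
    ∃ e, IsProjIn M e ∧ p * e = e ∧ e = d + v * e * star v := by
  obtain ⟨e, he, hpe, he0⟩ := exists_isProjIn_forall_mul_eq_zero_iff hp hd hv hpv hpd
  have hdv' : star v * d = 0 := by
    simpa only [star_mul, hd.star_eq, star_zero] using congrArg star hdv
  have hsum : IsStarProjection (d + v * e * star v) := by
    refine hd.isStarProjection.add (isStarProjection_conj he.isStarProjection (by rw [hvp, hpe])) ?_
    rw [← mul_assoc, ← mul_assoc, hdv, zero_mul, zero_mul]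
  refine ⟨e, he, hpe, ?_⟩
  refine eq_of_isStarProjection_of_forall_mul_eq_zero_iff he.isStarProjection hsum fun a => ?_
  rw [he0]
  constructor
  · rintro ⟨hda, hea⟩
    rw [add_mul, mul_assoc, mul_assoc v, hda, hea, mul_zero, add_zero]
  · intro h
    have hda : d * ((d + v * e * star v) * a) = d * a := by
      simp only [add_mul, mul_add, ← mul_assoc, hd.2.2, hdv, zero_mul, add_zero]
    have hea : star v * ((d + v * e * star v) * a) = e * (star v * a) := by
      simp only [add_mul, mul_add, ← mul_assoc, hdv', hvp, hpe, zero_mul, zero_add]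
    rw [← hda, ← hea, h, mul_zero, mul_zero]
    exact ⟨rfl, rfl⟩

theorem mvNEquiv_of_star_mul_self_eq {f v : H →L[ℂ] H} (hp : IsProjIn M p) (hf : IsProjIn M f)
    (hpf : p * f = f) (hv : v ∈ M) (hvp : star v * v = p) (hfv : f * v = v) :
    MvNEquiv M p f := by
  have hpv : p * v = v := by rw [← hfv, ← mul_assoc, hpf]
  have hdv : (p - f) * v = 0 := by rw [sub_mul, hpv, hfv, sub_self]
  obtain ⟨e, he, hpe, hev⟩ := exists_isProjIn_eq_add_conj hp (hp.sub hf hpf) hv hvp hpv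
    (by rw [mul_sub, hp.2.2, hpf]) hdv
  have hep : e * p = e := mul_eq_of_isSelfAdjoint_of_mul_eq hp.2.1 he.2.1 hpe
  have heve : e * (v * e) = v * e := by
    calc e * (v * e) = (p - f + v * e * star v) * (v * e) := by rw [← hev]
      _ = (p - f) * v * e + v * e * (star v * v) * e := by noncomm_ring
      _ = v * e := by rw [hdv, zero_mul, zero_add, hvp, mul_assoc v, hep, mul_assoc, he.2.2]
  have hpve : (p - e) * (v * e) = 0 := by rw [sub_mul, ← mul_assoc, hpv, heve, sub_self]
  have hs : star (v * e + (p - e)) = e * star v + (p - e) := by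
    simp only [star_add, star_mul, star_sub, hp.star_eq, he.star_eq]
  have hd : (p - e) * (p - e) = p - e := (hp.sub he hpe).2.2
  have hpve' : e * star v * (p - e) = 0 := by
    simpa only [star_mul, star_sub, hp.star_eq, he.star_eq, star_zero] using congrArg star hpve
  refine ⟨v * e + (p - e), add_mem (mul_mem hv he.1) (sub_mem hp.1 he.1), ?_, ?_⟩
  · calc star (v * e + (p - e)) * (v * e + (p - e))
        = e * (star v * v) * e + e * star v * (p - e) + (p - e) * (v * e)
          + (p - e) * (p - e) := by
          rw [hs]
          noncomm_ring
      _ = p := by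
          rw [hvp, hep, he.2.2, hpve', hpve, hd, add_zero, add_zero, add_sub_cancel]
  · calc (v * e + (p - e)) * star (v * e + (p - e))
        = v * (e * e) * star v + v * (e * (p - e)) + (p - e) * e * star v
          + (p - e) * (p - e) := by
          rw [hs]
          noncomm_ring
      _ = v * e * star v + (p - e) := by
          rw [he.2.2, hd, mul_sub, sub_mul, hep, hpe, he.2.2, sub_self, mul_zero, zero_mul,
            add_zero, add_zero]
      _ = f := by rw [← sub_eq_iff_eq_add'.2 hev]; abel

protected theorem SubEquiv.antisymm (hpq : SubEquiv M p q) (hqp : SubEquiv M q p)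
    (hp : IsProjIn M p) (hq : IsProjIn M q) : MvNEquiv M p q := by
  obtain ⟨v, hv, hvp, hqv⟩ := (subEquiv_iff hp hq).1 hpq
  obtain ⟨f, hf, hqf, -, hpf⟩ := hqp
  suffices h : MvNEquiv M p f from h.trans hqf.symm hp hq
  obtain ⟨w, hw, hwq, rfl⟩ := hqf
  rw [← star_eq_adjoint] at hwq hf hpf ⊢
  refine mvNEquiv_of_star_mul_self_eq hp hf hpf (mul_mem hw hv) ?_ ?_
  · rw [star_mul, mul_assoc, ← mul_assoc (star w), hwq, hqv, hvp]
  · rw [mul_assoc, ← mul_assoc (star w), hwq, hqv]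

theorem SubEquiv.mvNEquiv_of_mul_eq (hpr : SubEquiv M p r) (hpq : MvNEquiv M p q)
    (hqr : q * r = r) (hp : IsProjIn M p) (hq : IsProjIn M q) (hr : IsProjIn M r) :
    MvNEquiv M p r :=
  hpr.antisymm ((of_mul_eq hr hq hqr).trans (hpq.symm.subEquiv hp) hr hq hp) hp hr

end SchroederBernstein

theorem exists_maximal_subset_pairwise {α : Type*} (X : Set α) (r : α → α → Prop) :
    ∃ S, Maximal (fun S => S ⊆ X ∧ S.Pairwise r) S := by
  refine zorn_subset {S | S ⊆ X ∧ S.Pairwise r} fun c hc hchain => ?_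
  exact ⟨⋃₀ c, ⟨Set.sUnion_subset fun s hs => (hc hs).1,
    (Set.pairwise_sUnion hchain.directedOn).2 fun s hs => (hc hs).2⟩,
    fun _ => Set.subset_sUnion_of_mem⟩

/-- The partial isometries of `M` whose initial projection lies below `a` and whose final
projection lies below `b`. -/
def partialIsometries (M : VonNeumannAlgebra H) (a b : H →L[ℂ] H) : Set (H →L[ℂ] H) :=
  {u | u ∈ M ∧ IsPartialIsometry u ∧ b * u = u ∧ u * a = u}

theorem star_mem_partialIsometries (ha : IsProjIn M a) (hb : IsProjIn M b) {u : H →L[ℂ] H}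
    (hu : u ∈ partialIsometries M a b) : star u ∈ partialIsometries M b a := by
  obtain ⟨huM, hpi, hbu, hua⟩ := hu
  refine ⟨star_mem huM, hpi.star, ?_, ?_⟩
  · simpa only [star_mul, ha.star_eq] using congrArg star hua
  · simpa only [star_mul, hb.star_eq] using congrArg star hbu

theorem partialIsometries_mono {a' b' : H →L[ℂ] H} (ha : a' * a = a') (hb : b * b' = b') :
    partialIsometries M a' b' ⊆ partialIsometries M a b := by
  rintro u ⟨hu, hpi, hbu, hua⟩
  exact ⟨hu, hpi, by rw [← hbu, ← mul_assoc, hb], by rw [← hua, mul_assoc, ha]⟩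

theorem isStarOrthogonal_of_mem_partialIsometries (ha : IsProjIn M a) (hb : IsProjIn M b)
    {u w : H →L[ℂ] H} (hu : u ∈ partialIsometries M a b) (hbw : b * w = 0) (hwa : w * a = 0) :
    IsStarOrthogonal u w := by
  constructor
  · rw [← hu.2.2.1, star_mul, hb.star_eq, mul_assoc, hbw, mul_zero]
  · rw [← hu.2.2.2, mul_assoc, ← star_star (a * star w), star_mul, star_star, ha.star_eq, hwa,
      star_zero, mul_zero]

theorem subEquiv_of_mem_partialIsometries (hb : IsProjIn M b) {u : H →L[ℂ] H}
    (hu : u ∈ partialIsometries M a b) : SubEquiv M (star u * u) b :=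
  (subEquiv_iff (hu.2.1.isProjIn_star_mul_self hu.1) hb).2 ⟨u, hu.1, rfl, hu.2.2.1⟩

theorem isProjIn_sub_mul_star_self (hb : IsProjIn M b) {u : H →L[ℂ] H}
    (hu : u ∈ partialIsometries M a b) : IsProjIn M (b - u * star u) :=
  hb.sub (hu.2.1.isProjIn_mul_star_self hu.1) (by rw [← mul_assoc, hu.2.2.1])

theorem isProjIn_sub_star_mul_self (ha : IsProjIn M a) (hb : IsProjIn M b) {u : H →L[ℂ] H}
    (hu : u ∈ partialIsometries M a b) : IsProjIn M (a - star u * u) := by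
  simpa using isProjIn_sub_mul_star_self ha (star_mem_partialIsometries ha hb hu)

theorem exists_mem_partialIsometries_ne_zero {x : H →L[ℂ] H} (hx : x ∈ M) (hx0 : x ≠ 0)
    (hbx : b * x = x) (hxa : x * a = x) : ∃ u ∈ partialIsometries M a b, u ≠ 0 := by
  obtain ⟨u, hu, hinit, hfinal⟩ := mvNEquiv_one_sub_annihilatorProj hx
  rw [← star_eq_adjoint] at hinit hfinal
  have hpi : IsPartialIsometry u := isPartialIsometry_of_isStarProjection_star_mul_self
    (hinit ▸ isStarProjection_annihilatorProj.one_sub)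
  refine ⟨u, ⟨hu, hpi, ?_, ?_⟩, ?_⟩
  · have h : (1 - b) * (u * star u) = 0 := by
      rw [hfinal, mul_one_sub_annihilatorProj_eq_zero_iff]
      simp [sub_mul, hbx]
    have h' : (1 - b) * u = 0 :=
      calc (1 - b) * u = (1 - b) * (u * star u) * u := by rw [mul_assoc, hpi]
        _ = 0 := by rw [h, zero_mul]
    rw [sub_mul, one_mul, sub_eq_zero] at h'
    exact h'.symm
  · have h : star u * u * (1 - a) = 0 := by
      rw [hinit, one_sub_annihilatorProj_mul_eq_zero_iff]
      simp [mul_sub, hxa]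
    rw [hpi.star_mul_self_mul_eq_zero_iff, mul_sub, mul_one, sub_eq_zero] at h
    exact h.symm
  · rintro rfl
    have h : (1 - annihilatorProj {x}) * 1 = 0 := by rw [← hinit, mul_zero, zero_mul]
    exact hx0 (by simpa using one_sub_annihilatorProj_mul_eq_zero_iff.1 h)

theorem exists_mem_partialIsometries_forall_isStarOrthogonal_mem
    {S : Set (H →L[ℂ] H)} (hS : S ⊆ partialIsometries M a b) (hSS : S.Pairwise IsStarOrthogonal) :
    ∃ T ∈ partialIsometries M a b, ∀ w ∈ S, T * star T * w = w ∧ w * (star T * T) = w := by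
  obtain ⟨T, hT, hpi, hfinal, hinit⟩ :=
    exists_isPartialIsometry_hasStrongSum (U := ((↑) : S → H →L[ℂ] H)) (fun w => (hS w.2).2.1)
      fun w w' h => hSS w.2 w'.2 (Subtype.coe_ne_coe.2 h)
  refine ⟨T, ⟨hT.mem fun w => (hS w.2).1, hpi, ?_, ?_⟩,
    fun w hw => ⟨hfinal ⟨w, hw⟩, hinit ⟨w, hw⟩⟩⟩
  · refine HasStrongSum.unique ?_ hT
    simpa only [(hS (Subtype.prop _)).2.2.1] using hT.mul_left b
  · refine HasStrongSum.unique ?_ hT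
    simpa only [(hS (Subtype.prop _)).2.2.2] using hT.mul_right a

theorem exists_mem_partialIsometries_forall_mul_mul_eq_zero (ha : IsProjIn M a)
    (hb : IsProjIn M b) :
    ∃ T ∈ partialIsometries M a b, ∀ x ∈ M, (b - T * star T) * x * (a - star T * T) = 0 := by
  obtain ⟨S, ⟨hS, hSS⟩, hmax⟩ :=
    exists_maximal_subset_pairwise (partialIsometries M a b) IsStarOrthogonal
  obtain ⟨T, hT, hTS⟩ := exists_mem_partialIsometries_forall_isStarOrthogonal_mem hS hSS
  refine ⟨T, hT, fun x hx => ?_⟩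
  by_contra hx0
  set a₀ := a - star T * T with ha₀def
  set b₀ := b - T * star T with hb₀def
  have ha₀ : IsProjIn M a₀ := isProjIn_sub_star_mul_self ha hb hT
  have hb₀ : IsProjIn M b₀ := isProjIn_sub_mul_star_self hb hT
  obtain ⟨u, hu, hu0⟩ := exists_mem_partialIsometries_ne_zero (a := a₀) (b := b₀)
    (mul_mem (mul_mem hb₀.1 hx) ha₀.1) hx0
    (by rw [← mul_assoc, ← mul_assoc, hb₀.2.2]) (by rw [mul_assoc, ha₀.2.2])
  have huS (w) (hw : w ∈ S) : IsStarOrthogonal u w := by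
    refine isStarOrthogonal_of_mem_partialIsometries ha₀ hb₀ hu ?_ ?_
    · rw [hb₀def, sub_mul, (hS hw).2.2.1, (hTS w hw).1, sub_self]
    · rw [ha₀def, mul_sub, (hS hw).2.2.2, (hTS w hw).2, sub_self]
  have hu' : u ∈ partialIsometries M a b := by
    refine partialIsometries_mono ?_ ?_ hu
    · rw [ha₀def, sub_mul, ha.2.2, mul_assoc, hT.2.2.2]
    · rw [hb₀def, mul_sub, hb.2.2, ← mul_assoc, hT.2.2.1]
  have hmem : u ∈ S := hmax
    ⟨Set.insert_subset hu' hS, hSS.insert fun w hw _ => ⟨huS w hw, (huS w hw).symm⟩⟩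
    (Set.subset_insert u S) (Set.mem_insert u S)
  exact hu0 ((CStarRing.star_mul_self_eq_zero_iff u).1 (huS u hmem).1)

theorem exists_isCentralProj_of_forall_mul_mul_eq_zero (hb : b ∈ M)
    (h : ∀ x ∈ M, b * x * a = 0) : ∃ z, IsCentralProj M z ∧ z * a = a ∧ b * z = 0 := by
  let S : Set (H →L[ℂ] H) := {y | ∃ x ∈ M, b * x = y}
  have hSM : S ⊆ M := by
    rintro _ ⟨x, hx, rfl⟩
    exact mul_mem hb hx
  have hz : IsProjIn M (annihilatorProj S) := isProjIn_annihilatorProj hSM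
  set z := annihilatorProj S
  have hbxz {x : H →L[ℂ] H} (hx : x ∈ M) : b * x * z = 0 := mul_annihilatorProj ⟨x, hx, rfl⟩
  have hzyz {y : H →L[ℂ] H} (hy : y ∈ M) : z * (y * z) = y * z := by
    refine annihilatorProj_mul_eq_self_iff.2 ?_
    rintro _ ⟨x, hx, rfl⟩
    rw [← mul_assoc, mul_assoc b, hbxz (mul_mem hx hy)]
  refine ⟨z, ⟨hz, fun y hy => ?_⟩, ?_, by simpa using hbxz (one_mem M)⟩
  · have := congrArg star (hzyz (star_mem hy))
    simp only [star_mul, star_star, hz.star_eq] at this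
    rw [← this, mul_assoc, hzyz hy]
  · refine annihilatorProj_mul_eq_self_iff.2 ?_
    rintro _ ⟨x, hx, rfl⟩
    exact h x hx

theorem exists_isCentralProj_subEquiv (ha : IsProjIn M a) (hb : IsProjIn M b) :
    ∃ z, IsCentralProj M z ∧ SubEquiv M (z * a) (z * b) ∧
      SubEquiv M ((1 - z) * b) ((1 - z) * a) := by
  obtain ⟨T, hT, hT0⟩ := exists_mem_partialIsometries_forall_mul_mul_eq_zero ha hb
  obtain ⟨z, hz, hza, hbz⟩ := exists_isCentralProj_of_forall_mul_mul_eq_zero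
    (isProjIn_sub_mul_star_self hb hT).1 hT0
  have hTT := hT.2.1.isProjIn_star_mul_self hT.1
  have hTT' := hT.2.1.star.isProjIn_star_mul_self (star_mem hT.1)
  have hinit : (1 - z) * a = (1 - z) * (star T * T) := by
    rw [← sub_eq_zero, ← mul_sub, sub_mul, one_mul, hza, sub_self]
  have hfinal : z * b = z * (star (star T) * star T) := by
    rw [← sub_eq_zero, ← mul_sub, star_star, hz.2 _ (isProjIn_sub_mul_star_self hb hT).1, hbz]
  refine ⟨1 - z, hz.one_sub, ?_, ?_⟩
  · rw [hinit]
    exact (subEquiv_of_mem_partialIsometries hb hT).central_mul hTT hb hz.one_sub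
  · rw [sub_sub_cancel, hfinal]
    exact (subEquiv_of_mem_partialIsometries ha
      (star_mem_partialIsometries ha hb hT)).central_mul hTT' ha hz

section Parallelogram

/-- The infimum of two projections, that is, the projection onto the intersection of their
ranges. -/
def projInf (p q : H →L[ℂ] H) : H →L[ℂ] H :=
  annihilatorProj {1 - p, 1 - q}

theorem projInf_mul_eq_iff : projInf p q * a = a ↔ p * a = a ∧ q * a = a := by
  simp only [projInf, annihilatorProj_mul_eq_self_iff, Set.forall_mem_insert,
    Set.mem_singleton_iff, forall_eq, sub_mul, one_mul, sub_eq_zero, eq_comm (a := a)]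

theorem projInf_comm (p q : H →L[ℂ] H) : projInf p q = projInf q p := by
  rw [projInf, Set.pair_comm, projInf]

theorem isProjIn_projInf (hp : IsProjIn M p) (hq : IsProjIn M q) : IsProjIn M (projInf p q) :=
  isProjIn_annihilatorProj (Set.pair_subset hp.one_sub.1 hq.one_sub.1)

theorem mul_projInf (p q : H →L[ℂ] H) : p * projInf p q = projInf p q :=
  (projInf_mul_eq_iff.1 isStarProjection_annihilatorProj.isIdempotentElem).1

theorem one_sub_annihilatorProj_one_sub_mul (hp : IsProjIn M p) (hq : IsProjIn M q) :
    1 - annihilatorProj {(1 - q) * p} = p - projInf p q := by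
  have hm := isProjIn_projInf hp hq
  have hpm := mul_projInf p q
  have hmp : projInf p q * p = projInf p q :=
    mul_eq_of_isSelfAdjoint_of_mul_eq hp.2.1 hm.2.1 hpm
  have hqm : q * projInf p q = projInf p q := projInf_comm q p ▸ mul_projInf q p
  rw [annihilatorProj_eq (hp.sub hm hpm).isStarProjection.one_sub, sub_sub_cancel]
  intro a
  simp only [Set.mem_singleton_iff, forall_eq, sub_mul, one_mul, sub_eq_self, sub_eq_zero]
  constructor
  · intro h
    rw [mul_assoc, h, ← mul_assoc, hqm]
  · intro h
    have hmpa : projInf p q * (p * a) = p * a :=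
      projInf_mul_eq_iff.2 ⟨by rw [← mul_assoc, hp.2.2], by rw [← mul_assoc, ← h]⟩
    rw [← hmpa, ← mul_assoc, hmp]

/- Kaplansky's parallelogram law `p - p ∧ q ∼ p ∨ q - q`, in which `p ∨ q` is written as
`1 - (1 - p) ∧ (1 - q)`. -/
theorem mvNEquiv_sub_projInf (hp : IsProjIn M p) (hq : IsProjIn M q) :
    MvNEquiv M (p - projInf p q) ((1 - q) - projInf (1 - p) (1 - q)) := by
  have h := mvNEquiv_one_sub_annihilatorProj (mul_mem hq.one_sub.1 hp.1)
  rw [one_sub_annihilatorProj_one_sub_mul hp hq, star_mul, hp.star_eq, hq.one_sub.star_eq] at h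
  have h' := one_sub_annihilatorProj_one_sub_mul hq.one_sub hp.one_sub
  rw [sub_sub_cancel] at h'
  rwa [h', projInf_comm (1 - q)] at h

end Parallelogram

theorem SubEquiv.central_mul_of_sub {m n : H →L[ℂ] H} (hmn : SubEquiv M (z * m) (z * n))
    (h : MvNEquiv M (p - m) (q - n)) (hz : IsCentralProj M z) (hp : IsProjIn M p)
    (hq : IsProjIn M q) (hm : IsProjIn M m) (hn : IsProjIn M n) (hpm : p * m = m)
    (hqn : q * n = n) : SubEquiv M (z * p) (z * q) := by
  have hp' := hp.sub hm hpm
  have hq' := hq.sub hn hqn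
  have orth {p m : H →L[ℂ] H} (hp : IsProjIn M p) (hm : IsProjIn M m) (hpm : p * m = m) :
      z * m * (z * (p - m)) = 0 := by
    rw [hz.mul_mul_mul hm.1, mul_sub, mul_eq_of_isSelfAdjoint_of_mul_eq hp.2.1 hm.2.1 hpm, hm.2.2,
      sub_self, mul_zero]
  have := hmn.add ((h.subEquiv hq').central_mul hp' hq' hz) (hz.isProjIn_mul hm)
    (hz.isProjIn_mul hp') (hz.isProjIn_mul hn) (hz.isProjIn_mul hq') (orth hp hm hpm)
    (orth hq hn hqn)
  simpa only [← mul_add, add_sub_cancel] using this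

theorem exists_isCentralProj_subEquiv_one_sub (hp : IsProjIn M p) (hq : IsProjIn M q) :
    ∃ z, IsCentralProj M z ∧ SubEquiv M (z * p) (z * (1 - q)) ∧
      SubEquiv M ((1 - z) * (1 - p)) ((1 - z) * q) := by
  have hm := isProjIn_projInf hp hq
  have hn := isProjIn_projInf hp.one_sub hq.one_sub
  obtain ⟨z, hz, hmn, hnm⟩ := exists_isCentralProj_subEquiv hm hn
  have hpq := mvNEquiv_sub_projInf hp hq
  have hpq' := mvNEquiv_sub_projInf hp.one_sub hq.one_sub
  rw [sub_sub_cancel, sub_sub_cancel] at hpq'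
  refine ⟨z, hz, ?_, ?_⟩
  · exact hmn.central_mul_of_sub hpq hz hp hq.one_sub hm hn (mul_projInf p q)
      (projInf_comm (1 - q) (1 - p) ▸ mul_projInf _ _)
  · exact hnm.central_mul_of_sub hpq' hz.one_sub hp.one_sub hq hn hm (mul_projInf _ _)
      (projInf_comm q p ▸ mul_projInf q p)

theorem exists_isCentralProj_mvNEquiv_of_isometries {s t : H →L[ℂ] H} (hs : s ∈ M)
    (ht : t ∈ M) (hss : star s * s = 1) (htt : star t * t = 1) (hst : star s * t = 0)
    (hq : IsProjIn M q) :
    ∃ z, IsCentralProj M z ∧ MvNEquiv M (z * (1 - q)) z ∧ MvNEquiv M ((1 - z) * q) (1 - z) := by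
  have hpi : IsPartialIsometry s := by rw [IsPartialIsometry, mul_assoc, hss, mul_one]
  have hp := hpi.isProjIn_mul_star_self hs
  have hone : SubEquiv M 1 (s * star s) :=
    (subEquiv_iff isProjIn_one hp).2 ⟨s, hs, hss, hpi⟩
  have hone' : SubEquiv M 1 (1 - s * star s) :=
    (subEquiv_iff isProjIn_one hp.one_sub).2
      ⟨t, ht, htt, by rw [sub_mul, one_mul, mul_assoc, hst, mul_zero, sub_zero]⟩
  obtain ⟨z, hz, hzq, hzq'⟩ := exists_isCentralProj_subEquiv_one_sub hp hq
  have absorb {z p q : H →L[ℂ] H} (hz : IsCentralProj M z) (hp : IsProjIn M p)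
      (hq : IsProjIn M q) (hone : SubEquiv M 1 p) (hpq : SubEquiv M (z * p) (z * q)) :
      MvNEquiv M (z * q) z := by
    have hzp := hone.central_mul isProjIn_one hp hz
    rw [mul_one] at hzp
    exact (SubEquiv.of_mul_eq (hz.isProjIn_mul hq) hz.1 (by rw [← mul_assoc, hz.1.2.2])).antisymm
      (hzp.trans hpq hz.1 (hz.isProjIn_mul hp) (hz.isProjIn_mul hq)) (hz.isProjIn_mul hq) hz.1
  exact ⟨z, hz, absorb hz hp hq.one_sub hone hzq,
    absorb hz.one_sub hp.one_sub hq hone' hzq'⟩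

theorem ProperlyInfiniteProj.exists_isometries (hM : ProperlyInfiniteProj M 1) :
    ∃ s ∈ M, ∃ t ∈ M, star s * s = 1 ∧ star t * t = 1 ∧ star s * t = 0 := by
  obtain ⟨-, e, he, hee, h, -⟩ := hM
  have isometry (n : ℕ) : ∃ s ∈ M, star s * s = 1 ∧ e n * s = s := by
    obtain ⟨s, hs, hss, hse⟩ := (h n).symm
    refine ⟨s, hs, hss, ?_⟩
    rw [← hse, mul_assoc, hss, mul_one]
  obtain ⟨s, hs, hss, hes⟩ := isometry 0
  obtain ⟨t, ht, htt, het⟩ := isometry 1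
  refine ⟨s, hs, t, ht, hss, htt, ?_⟩
  rw [← hes, ← het, star_mul, (he 0).star_eq, mul_assoc, ← mul_assoc (e 0), hee zero_ne_one,
    zero_mul, mul_zero]

theorem compl_equiv_one_general (hM : ProperlyInfiniteProj M 1) (hq : IsProjIn M q)
    (h : ∀ z, IsCentralProj M z → z ≠ 0 → ¬ MvNEquiv M (z * q) z) : MvNEquiv M (1 - q) 1 := by
  obtain ⟨s, hs, t, ht, hss, htt, hst⟩ := hM.exists_isometries
  obtain ⟨z, hz, hzq, hzq'⟩ :=
    exists_isCentralProj_mvNEquiv_of_isometries hs ht hss htt hst hq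
  have hz1 : 1 - z = 0 := by_contra fun h0 => h _ hz.one_sub h0 hzq'
  rw [← sub_eq_zero.1 hz1, one_mul] at hzq
  exact hzq

end Comparison

/-- Let `M` be a properly infinite von Neumann algebra and `q, r`
projections with `z q ≺ z r` for every nonzero central projection `z`.
Then `1 - q ∼ 1`. -/
theorem compl_equiv_one (M : VonNeumannAlgebra H)
    (hM : ProperlyInfiniteProj M (1 : H →L[ℂ] H))
    (q r : H →L[ℂ] H) (hq : IsProjIn M q) (hr : IsProjIn M r)
    (h : ∀ z, IsCentralProj M z → z ≠ 0 →
      SubEquiv M (z * q) (z * r) ∧ ¬ MvNEquiv M (z * q) (z * r)) :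
    MvNEquiv M (1 - q) 1 := by
  refine compl_equiv_one_general hM hq fun z hz hz0 hzq => ?_
  exact (h z hz hz0).2 <| (h z hz hz0).1.mvNEquiv_of_mul_eq hzq (by rw [← mul_assoc, hz.1.2.2])
    (hz.isProjIn_mul hq) hz.1 (hz.isProjIn_mul hr)
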